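/- If γ = (α_w C_v)/(α_v E_w) is irrational, then for every s₀ > 0 the set of values x_w(s₀ · e^{−nπ/g_v}), as n ranges over the natural numbers, is dense modulo 2π; that is, its image in the circle ℝ/2πℤ is dense. -/

import Mathlib

/-!
Along `sₙ = s₀ e^{-nπ/g_v}` the angle `φ` advances by exactly `π` per step. This leaves `C` fixed,
adds `∫₀^π dt / C(t) = π` to `Φ`, whatever the value of `a`, and changes the term `-g_w δ_v ln s` by
`-γπ`. Hence `x_w(sₙ) = x_w(s₀) + nπ(1 - γ)`, and modulo `2π` this is the forward orbit of an
irrational rotation.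
-/

open MeasureTheory Filter Topology Function
open scoped Real AddConstMap

/-- The squared distance to the origin of the point `(p cos t, q sin t)` of an ellipse. The function
`C` of the theorem is the case `p = a`, `q = 1 / a`. -/
noncomputable def ellipseNormSq (p q t : ℝ) : ℝ :=
  p ^ 2 * Real.cos t ^ 2 + q ^ 2 * Real.sin t ^ 2

section Ellipse

variable {p q : ℝ}

theorem ellipseNormSq_periodic (p q : ℝ) : Periodic (ellipseNormSq p q) π := fun t => by
  simp only [ellipseNormSq, Real.cos_add_pi, Real.sin_add_pi, neg_sq]

theorem ellipseNormSq_pos (hp : p ≠ 0) (hq : q ≠ 0) (t : ℝ) : 0 < ellipseNormSq p q t := by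
  rcases eq_or_ne (Real.sin t) 0 with hsin | hsin
  · have hcos : Real.cos t ^ 2 = 1 := by simp [Real.cos_sq', hsin]
    simpa [ellipseNormSq, hsin, hcos] using sq_pos_of_ne_zero hp
  · unfold ellipseNormSq
    positivity

theorem continuous_one_div_ellipseNormSq (hp : p ≠ 0) (hq : q ≠ 0) :
    Continuous fun t => 1 / ellipseNormSq p q t :=
  continuous_const.div (by unfold ellipseNormSq; fun_prop) fun t => (ellipseNormSq_pos hp hq t).ne'

theorem hasDerivAt_arctan_mul_tan (hp : p ≠ 0) (hq : q ≠ 0) {t : ℝ} (ht : Real.cos t ≠ 0) :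
    HasDerivAt (fun x => Real.arctan (q / p * Real.tan x) / (p * q))
      (1 / ellipseNormSq p q t) t := by
  have hC : p ^ 2 * Real.cos t ^ 2 + q ^ 2 * Real.sin t ^ 2 ≠ 0 := (ellipseNormSq_pos hp hq t).ne'
  refine ((((Real.hasDerivAt_tan ht).const_mul (q / p)).arctan).div_const (p * q)).congr_deriv ?_
  have hsq : 1 + (q / p * Real.tan t) ^ 2 = ellipseNormSq p q t / (p ^ 2 * Real.cos t ^ 2) := by
    rw [ellipseNormSq, Real.tan_eq_sin_div_cos]
    field_simp
  rw [hsq, ellipseNormSq]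
  field_simp

theorem integral_one_div_ellipseNormSq (hp : 0 < p) (hq : 0 < q) :
    ∫ t in (0 : ℝ)..π, 1 / ellipseNormSq p q t = π / (p * q) := by
  have hperiodic : Periodic (fun t => 1 / ellipseNormSq p q t) π :=
    (ellipseNormSq_periodic p q).comp (1 / ·)
  have hatTop : Tendsto (fun x => Real.arctan (q / p * Real.tan x) / (p * q))
      (𝓝[<] (π / 2)) (𝓝 (π / 2 / (p * q))) :=
    ((Real.tendsto_arctan_atTop.mono_right nhdsWithin_le_nhds).comp
      (Real.tendsto_tan_pi_div_two.const_mul_atTop (div_pos hq hp))).div_const _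
  have hatBot : Tendsto (fun x => Real.arctan (q / p * Real.tan x) / (p * q))
      (𝓝[>] (-(π / 2))) (𝓝 (-(π / 2) / (p * q))) :=
    ((Real.tendsto_arctan_atBot.mono_right nhdsWithin_le_nhds).comp
      (Real.tendsto_tan_neg_pi_div_two.const_mul_atBot (div_pos hq hp))).div_const _
  calc ∫ t in (0 : ℝ)..π, 1 / ellipseNormSq p q t
      = ∫ t in -(π / 2)..π / 2, 1 / ellipseNormSq p q t := by
        simpa [show -(π / 2) + π = π / 2 by ring]
          using hperiodic.intervalIntegral_add_eq 0 (-(π / 2))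
    _ = π / 2 / (p * q) - -(π / 2) / (p * q) :=
        intervalIntegral.integral_eq_sub_of_hasDerivAt_of_tendsto (by linarith [Real.pi_pos])
          (fun t ht => hasDerivAt_arctan_mul_tan hp.ne' hq.ne' (Real.cos_pos_of_mem_Ioo ht).ne')
          ((continuous_one_div_ellipseNormSq hp.ne' hq.ne').intervalIntegrable _ _) hatBot hatTop
    _ = π / (p * q) := by ring

end Ellipse

theorem log_mul_exp {s : ℝ} (hs : s ≠ 0) (r : ℝ) : Real.log (s * Real.exp r) = Real.log s + r := by
  rw [Real.log_mul hs (Real.exp_ne_zero _), Real.log_exp]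

theorem addConstMap_apply_log_mul_exp {T m g s : ℝ} (F : ℝ →+c[T, m] ℝ) (hg : g ≠ 0) (hs : s ≠ 0)
    (b : ℝ) (n : ℕ) :
    F (-g * Real.log (s * Real.exp (-(n * T) / g)) + b) = F (-g * Real.log s + b) + n * m := by
  have hshift : -g * (Real.log s + -(n * T) / g) + b = -g * Real.log s + b + n • T := by
    rw [nsmul_eq_mul]
    field_simp
    ring
  rw [log_mul_exp hs, hshift, AddConstMapClass.map_add_nsmul, nsmul_eq_mul]

theorem denseRange_coe_add_nat_mul {p θ : ℝ} [Fact (0 < p)] (hθ : Irrational (θ / p)) (x : ℝ) :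
    DenseRange fun n : ℕ => ((x + n * θ : ℝ) : AddCircle p) := by
  have hmultiples : DenseRange fun n : ℕ => n • (θ : AddCircle p) :=
    denseRange_zsmul_iff_nsmul.mp (AddCircle.denseRange_zsmul_coe_iff.mpr hθ)
  simpa [comp_def] using (Homeomorph.addLeft (x : AddCircle p)).surjective.denseRange.comp
    hmultiples (Homeomorph.addLeft _).continuous

theorem stmt_7_general {T p g κ μ b c : ℝ} [Fact (0 < p)] (hg : g ≠ 0) {C Φ φ x : ℝ → ℝ}
    (hC : Periodic C T) (hint : ∀ t₁ t₂, IntervalIntegrable (fun t => 1 / C t) volume t₁ t₂)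
    (hΦ : ∀ ψ, Φ ψ = ∫ t in (0 : ℝ)..ψ, 1 / C t)
    (hφ : ∀ s, φ s = -g * Real.log s + b)
    (hx : ∀ s, x s = κ * Real.log s - μ * Real.log (C (φ s)) + Φ (φ s) + c)
    (hirr : Irrational (((∫ t in (0 : ℝ)..T, 1 / C t) - κ * T / g) / p)) {s₀ : ℝ} (hs₀ : 0 < s₀) :
    DenseRange fun n : ℕ => ((x (s₀ * Real.exp (-(n * T) / g)) : ℝ) : AddCircle p) := by
  have hΦ_add (ψ : ℝ) : Φ (ψ + T) = Φ ψ + ∫ t in (0 : ℝ)..T, 1 / C t := by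
    simpa [hΦ] using (hC.comp (1 / ·)).intervalIntegral_add_eq_add 0 ψ hint
  let F : ℝ →+c[T, ∫ t in (0 : ℝ)..T, 1 / C t] ℝ :=
    { toFun := fun ψ => Φ ψ - μ * Real.log (C ψ)
      map_add_const' := fun ψ => by rw [hΦ_add, hC ψ]; ring }
  have hxF (s : ℝ) : x s = κ * Real.log s + F (-g * Real.log s + b) + c := by
    have hF (ψ : ℝ) : F ψ = Φ ψ - μ * Real.log (C ψ) := rfl
    rw [hx, hφ, hF]
    ring
  have horbit (n : ℕ) : x (s₀ * Real.exp (-(n * T) / g)) =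
      x s₀ + n * ((∫ t in (0 : ℝ)..T, 1 / C t) - κ * T / g) := by
    rw [hxF, hxF, addConstMap_apply_log_mul_exp F hg hs₀.ne', log_mul_exp hs₀.ne']
    ring
  simpa only [horbit] using denseRange_coe_add_nat_mul hirr (x s₀)

/-- If `γ = (α_w C_v)/(α_v E_w)` is irrational, then for every
`s₀ > 0` the set of values `x_w(s₀ · e^{−nπ/g_v})`, as `n` ranges over the
natural numbers, is dense modulo `2π`; that is, its image in the circle
`ℝ/2πℤ` is dense. -/
theorem stmt_7 (a Cv Ev αv Cw Ew αw ε : ℝ)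
    (ha : 0 < a) (hCv : 0 < Cv) (hEv : 0 < Ev) (hαv : 0 < αv)
    (hCw : 0 < Cw) (hEw : 0 < Ew) (hαw : 0 < αw) (hε : 0 < ε)
    (δv gv δw gw γ c₁ c₂ c₃ : ℝ)
    (hδv : δv = Cv / Ev) (hgv : gv = αv / Ev)
    (hδw : δw = Cw / Ew) (hgw : gw = -(αw / Ew))
    (hγ : γ = (αw * Cv) / (αv * Ew))
    (hc₁ : c₁ = ε ^ (1 - δv)) (hc₂ : c₂ = gv * Real.log ε)
    (hc₃ : c₃ = gw * Real.log ε)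
    (C Φ : ℝ → ℝ)
    (hC : ∀ φ : ℝ, C φ = a ^ 2 * Real.cos φ ^ 2 + (1 / a ^ 2) * Real.sin φ ^ 2)
    (hΦ : ∀ φ : ℝ, Φ φ = ∫ t in (0:ℝ)..φ, 1 / C t)
    (φ xw : ℝ → ℝ)
    (hφ : ∀ s : ℝ, φ s = -gv * Real.log s + c₂)
    (hxw : ∀ s : ℝ, xw s = -gw * δv * Real.log s - (gw / 2) * Real.log (C (φ s))
        + Φ (φ s) + c₃ - gw * Real.log c₁)
    (hγirr : Irrational γ) :
    ∀ s₀ : ℝ, 0 < s₀ →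
      Dense (Set.range fun n : ℕ =>
        ((xw (s₀ * Real.exp (-(n * Real.pi) / gv)) : ℝ) :
          AddCircle (2 * Real.pi))) := by
  intro s₀ hs₀
  have : Fact (0 < 2 * π) := ⟨Real.two_pi_pos⟩
  have hgv₀ : gv ≠ 0 := by rw [hgv]; positivity
  have ha_inv : 0 < 1 / a := by positivity
  obtain rfl : C = ellipseNormSq a (1 / a) :=
    funext fun t => by rw [hC, ellipseNormSq, one_div_pow]
  have hint := continuous_one_div_ellipseNormSq ha.ne' ha_inv.ne'
  have hrotation : ((∫ t in (0 : ℝ)..π, 1 / ellipseNormSq a (1 / a) t) -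
      -gw * δv * π / gv) / (2 * π) = (1 - γ) / 2 := by
    rw [integral_one_div_ellipseNormSq ha ha_inv, hgw, hδv, hgv, hγ]
    field_simp
  have hirr : Irrational ((1 - γ) / 2) := by
    simpa using (hγirr.ratCast_sub 1).div_natCast (m := 2) two_ne_zero
  exact stmt_7_general hgv₀ (ellipseNormSq_periodic a (1 / a))
    (fun _ _ => hint.intervalIntegrable _ _) hΦ hφ
    (κ := -gw * δv) (μ := gw / 2) (fun s => by rw [hxw, add_sub_assoc]) (hrotation ▸ hirr) hs₀
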